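/- arXiv:1602.06715 — 6 statements merged into one kernel-verified Lean document; each statement's English description precedes it below -/
import Mathlib

section
/- Let n ≥ 1 be an integer and let A be a subset of G = (ℤ/5ℤ)^n with |A| > 0.3·5^n and 3A ≠ G. If F is a subgroup of G of index 5 such that |A ∩ (c + F)| < 0.5·|F| for every coset c + F of F, then there is at most one coset c + F of F with |A ∩ (c + F)| > 0.4·|F|. -/
open Pointwise

/-- `itSum k A` is the `k`-fold sumset `kA = {a₁ + ⋯ + a_k : aᵢ ∈ A}`. -/
def itSum {G : Type*} [AddCommGroup G] : ℕ → Set G → Set G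
  | 0, _ => {0}
  | (k + 1), A => itSum k A + A

/-!
Dyson's `e`-transform yields a nonempty `u ⊆ s + t` with `#s + #t ≤ #u + #H`, where `H` is the
stabilizer of `u`. In a group of order `5 ^ n`, if `s` and `t` have densities `x` and `y` above
`2 / 5` and `s + t` is not everything, then `u` is a union of cosets of `H`, whose index is a
multiple of `5`, and has density at least `4 / 5`. Let `z` be the density of the complement of
`s + t`. If `H` has index at least `25`, then `x + y + z ≤ 26 / 25`. If `H` has index `5`, the
complement of `s + t` lies in a single coset of `H`, and counting inside and outside of that coset
gives `x + y + 2 * z ≤ 6 / 5`.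

Now let `c₁ + F` and `c₂ + F` be two different cosets in which `A` has density above `2 / 5`, let
`X i` be the part of `A` in `c₁ + i • (c₂ - c₁) + F`, and let `g ∉ 3A` lie in
`3 • c₁ + j • (c₂ - c₁) + F` with `j < 5`. Whenever `p + q + r = j`, the set `g - X r` misses
`X p + X q`. Both `X 0` and `X 1` are too dense to be such an `X r` with `p, q ≤ 1`. Hence `j = 4`,
since otherwise `j` is a sum of three terms from `{0, 1}`; the triples `(0, 0, 4)`, `(1, 1, 2)` and
`(0, 1, 3)` then bound the sum of the five densities by `3 / 2`, provided that those of `X 0` and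
`X 1` are at most `3 / 4`.
-/

open scoped Finset
open AddAction (stabilizer)

section
variable {G : Type*} [AddCommGroup G] [DecidableEq G]

theorem exists_subset_add_card_add_card_le {s t : Finset G} (hs : s.Nonempty) (ht : t.Nonempty) :
    ∃ u ⊆ s + t, u.Nonempty ∧ #s + #t ≤ #u + Nat.card (stabilizer G u) := by
  induction hn : #t using Nat.strong_induction_on generalizing s t with
  | _ n ih =>
  subst hn
  by_cases hfix : ∀ e : G, (t ∩ (-e +ᵥ s)).Nonempty → t ⊆ -e +ᵥ s
  -- No transform shrinks `t`, so every translate of `s` meeting `t` contains it; thus `t - b`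
  -- stabilizes `s` for each `b ∈ t`.
  · obtain ⟨b, hb⟩ := ht
    refine ⟨b +ᵥ s, ?_, hs.vadd_finset, ?_⟩
    · rw [add_comm, ← Finset.singleton_add]
      exact Finset.add_subset_add_right (Finset.singleton_subset_iff.2 hb)
    have hstab : ((-b +ᵥ t : Finset G) : Set G) ⊆ stabilizer G (b +ᵥ s) := by
      rw [AddAction.stabilizer_vadd_eq_right, Finset.coe_vadd_finset]
      rintro _ ⟨y, hy, rfl⟩
      refine AddAction.mem_stabilizer_finset'.2 fun a ha => ?_
      have hb' : b ∈ -(a - b) +ᵥ s := Finset.mem_vadd_finset.2 ⟨a, ha, by simp⟩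
      obtain ⟨x, hx, hxy⟩ :=
        Finset.mem_vadd_finset.1 (hfix (a - b) ⟨b, Finset.mem_inter.2 ⟨hb, hb'⟩⟩ hy)
      convert hx using 1
      rw [← hxy]
      simp only [vadd_eq_add]
      abel
    have hfin : (stabilizer G (b +ᵥ s) : Set G).Finite := by
      rw [← AddAction.stabilizer_coe_finset]
      exact AddAction.stabilizer_finite hs.vadd_finset (Finset.finite_toSet _)
    have hcard := Set.ncard_le_ncard hstab hfin
    rw [Set.ncard_coe_finset, Finset.card_vadd_finset] at hcard
    rw [Finset.card_vadd_finset]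
    exact Nat.add_le_add_left hcard _
  · push Not at hfix
    obtain ⟨e, hne, hsub⟩ := hfix
    have hlt : #(Finset.addDysonETransform e (s, t)).2 < #t :=
      Finset.card_lt_card ⟨Finset.inter_subset_left, fun h => hsub fun x hx =>
        Finset.mem_of_mem_inter_right (h hx)⟩
    obtain ⟨u, hu, hu0, hcard⟩ := ih _ hlt (s := (Finset.addDysonETransform e (s, t)).1)
      (hs.mono Finset.subset_union_left) hne rfl
    exact ⟨u, hu.trans (Finset.addDysonETransform.subset e (s, t)), hu0,
      (Finset.addDysonETransform.card e (s, t)).symm.trans_le hcard⟩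

theorem card_stabilizer_dvd_card (u : Finset G) : Nat.card (stabilizer G u) ∣ #u := by
  have h := AddSubgroup.card_add_eq_card_addSubgroup_add_card_quotient (stabilizer G u) (u : Set G)
  rw [← AddAction.stabilizer_coe_finset, AddAction.add_stabilizer_self] at h
  rw [← Set.ncard_coe_finset, ← Nat.card_coe_set_eq, ← AddAction.stabilizer_coe_finset, h]
  exact dvd_mul_right _ _

theorem mem_add_of_card_lt [Finite G] {s t : Finset G} (h : Nat.card G < #s + #t) (w : G) :
    w ∈ s + t := by
  have := Fintype.ofFinite G
  have himage : #(t.image (w - ·)) = #t := Finset.card_image_of_injective _ sub_right_injective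
  rw [Nat.card_eq_fintype_card, ← Finset.card_univ, ← himage] at h
  obtain ⟨x, hx⟩ := Finset.inter_nonempty_of_card_lt_card_add_card
    (Finset.subset_univ s) (Finset.subset_univ (t.image (w - ·))) h
  obtain ⟨hxs, y, hy, rfl⟩ : x ∈ s ∧ ∃ y ∈ t, w - y = x := by simpa using hx
  exact Finset.mem_add.2 ⟨w - y, hxs, y, hy, sub_add_cancel w y⟩

end

theorem card_le_card_mul_card_image_mk {G : Type*} [AddCommGroup G] (H : AddSubgroup G) [Finite H]
    [DecidableEq (G ⧸ H)] (s : Finset G) :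
    #s ≤ Nat.card H * #(s.image (QuotientAddGroup.mk : G → G ⧸ H)) := by
  have hsub : (s : Set G) ⊆ s + (H : Set G) := fun x hx => ⟨x, hx, 0, H.zero_mem, add_zero x⟩
  have hcard := AddSubgroup.card_add_eq_card_addSubgroup_add_card_quotient H (s : Set G)
  rw [Nat.card_coe_set_eq, Nat.card_coe_set_eq, ← Finset.coe_image, Set.ncard_coe_finset] at hcard
  rw [← Set.ncard_coe_finset s]
  exact (Set.ncard_le_ncard hsub (s.finite_toSet.add (Set.toFinite _))).trans_eq hcard

theorem exists_sub_add_mem_of_index_le {G : Type*} [AddCommGroup G] [Finite G] (H : AddSubgroup G)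
    {s t : Finset G} {i j : ℕ} (hs : i * Nat.card H < #s) (ht : j * Nat.card H < #t)
    (hij : H.index ≤ i + j + 1) (w : G) :
    ∃ a ∈ s, ∃ b ∈ t, w - (a + b) ∈ H := by
  classical
  have lt_card_image {k : ℕ} {r : Finset G} (hr : k * Nat.card H < #r) :
      k < #(r.image (QuotientAddGroup.mk : G → G ⧸ H)) :=
    lt_of_mul_lt_mul_left' <|
      (mul_comm _ k).trans_lt (hr.trans_le (card_le_card_mul_card_image_mk H r))
  have hlt : H.index < #(s.image (QuotientAddGroup.mk : G → G ⧸ H)) +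
      #(t.image (QuotientAddGroup.mk : G → G ⧸ H)) := by
    have := lt_card_image hs
    have := lt_card_image ht
    omega
  have hmem := mem_add_of_card_lt hlt (w : G ⧸ H)
  obtain ⟨_, haH, _, hbH, hab⟩ := Finset.mem_add.1 hmem
  obtain ⟨a, ha, rfl⟩ := Finset.mem_image.1 haH
  obtain ⟨b, hb, rfl⟩ := Finset.mem_image.1 hbH
  exact ⟨a, ha, b, hb, QuotientAddGroup.eq_iff_sub_mem.1 hab.symm⟩

theorem card_filter_sub_mem {G : Type*} [AddCommGroup G] [Fintype G] (H : AddSubgroup G)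
    [DecidablePred (· ∈ H)] (a : G) :
    #{x : G | x - a ∈ H} = Nat.card H := by
  classical
  have h : ({x : G | x - a ∈ H} : Finset G) = a +ᵥ ({x : G | x ∈ H} : Finset G) := by
    ext x
    simp [Finset.mem_vadd_finset, ← eq_sub_iff_add_eq']
  rw [h, Finset.card_vadd_finset, ← Fintype.card_subtype, ← Nat.card_eq_fintype_card]

theorem card_filter_sub_notMem_add_card_filter_sub_notMem_add_le {G : Type*} [AddCommGroup G]
    [Finite G] [DecidableEq G] {H : AddSubgroup G} [DecidablePred (· ∈ H)] {s t : Finset G}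
    {a b w : G} (hw : w ∉ s + t) (hwH : w - (a + b) ∈ H) :
    #{x ∈ s | x - a ∉ H} + #{y ∈ t | y - b ∉ H} + Nat.card H ≤ Nat.card G := by
  have := Fintype.ofFinite G
  let t' := ({y ∈ t | y - b ∉ H} : Finset G).image (w - ·)
  have hcard : #t' = #{y ∈ t | y - b ∉ H} := Finset.card_image_of_injective _ sub_right_injective
  have hdisj : Disjoint ({x ∈ s | x - a ∉ H} : Finset G) t' := by
    refine Finset.disjoint_right.2 fun x hx hxs => hw ?_
    obtain ⟨y, hy, rfl⟩ := Finset.mem_image.1 hx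
    exact Finset.mem_add.2 ⟨w - y, (Finset.mem_filter.1 hxs).1, y, (Finset.mem_filter.1 hy).1,
      sub_add_cancel w y⟩
  have hsub : ({x ∈ s | x - a ∉ H} : Finset G) ∪ t' ⊆ ({x : G | x - a ∉ H} : Finset G) := by
    refine Finset.union_subset (Finset.filter_subset_filter _ s.subset_univ) fun x hx => ?_
    obtain ⟨y, hy, rfl⟩ := Finset.mem_image.1 hx
    refine Finset.mem_filter.2 ⟨Finset.mem_univ _, fun hH => (Finset.mem_filter.1 hy).2 ?_⟩
    convert H.sub_mem hwH hH using 1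
    abel
  have hle := Finset.card_le_card hsub
  rw [Finset.card_union_of_disjoint hdisj, hcard] at hle
  have htotal := Finset.card_filter_add_card_filter_not (s := (Finset.univ : Finset G)) (· - a ∈ H)
  rw [card_filter_sub_mem, Finset.card_univ, ← Nat.card_eq_fintype_card] at htotal
  omega

section
variable {G : Type*} [AddCommGroup G] [Fintype G] [DecidableEq G] {H : AddSubgroup G}
  {s t : Finset G} {a b : G}

theorem card_filter_sub_mem_add_card_compl_add_le [DecidablePred (· ∈ H)] (hb : b ∈ t)
    (hcoset : ∀ v ∉ s + t, v - (a + b) ∈ H) :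
    #{x ∈ s | x - a ∈ H} + #(s + t)ᶜ ≤ Nat.card H := by
  have hdisj : Disjoint (b +ᵥ ({x ∈ s | x - a ∈ H} : Finset G)) (s + t)ᶜ := by
    refine Finset.disjoint_right.2 fun v hv hvs => Finset.mem_compl.1 hv ?_
    obtain ⟨x, hx, rfl⟩ := Finset.mem_vadd_finset.1 hvs
    rw [vadd_eq_add, add_comm b]
    exact Finset.add_mem_add (Finset.mem_filter.1 hx).1 hb
  rw [← Finset.card_vadd_finset b, ← Finset.card_union_of_disjoint hdisj,
    ← card_filter_sub_mem H (a + b)]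
  refine Finset.card_le_card (Finset.union_subset (fun v hv => ?_) fun v hv => ?_)
  · obtain ⟨x, hx, rfl⟩ := Finset.mem_vadd_finset.1 hv
    simpa [add_comm a b] using (Finset.mem_filter.1 hx).2
  · simpa using hcoset v (Finset.mem_compl.1 hv)

theorem card_add_card_add_two_mul_card_compl_add_le {w : G} (ha : a ∈ s) (hb : b ∈ t)
    (hw : w ∉ s + t) (hcoset : ∀ v ∉ s + t, v - (a + b) ∈ H) :
    #s + #t + 2 * #(s + t)ᶜ ≤ Nat.card G + Nat.card H := by
  classical
  have hs := Finset.card_filter_add_card_filter_not (s := s) (· - a ∈ H)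
  have ht := Finset.card_filter_add_card_filter_not (s := t) (· - b ∈ H)
  have hs_in := card_filter_sub_mem_add_card_compl_add_le hb hcoset
  have ht_in := card_filter_sub_mem_add_card_compl_add_le (s := t) (t := s) (a := b) ha
    (by rwa [add_comm t s, add_comm b a])
  have hout := card_filter_sub_notMem_add_card_filter_sub_notMem_add_le hw (hcoset w hw)
  rw [add_comm t s] at ht_in
  omega

theorem sub_mem_stabilizer_of_card_compl_le {u : Finset G} {v w : G}
    (hu : #uᶜ ≤ Nat.card (stabilizer G u)) (hv : v ∉ u) (hw : w ∉ u) :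
    v - w ∈ stabilizer G u := by
  classical
  have hsub : ({x : G | x - w ∈ stabilizer G u} : Finset G) ⊆ uᶜ := by
    intro x hx
    have hiff := AddAction.mem_stabilizer_finset.1 (Finset.mem_filter.1 hx).2 w
    rw [vadd_eq_add, sub_add_cancel] at hiff
    exact Finset.mem_compl.2 (hiff.not.2 hw)
  have hle := hu.trans_eq (card_filter_sub_mem (stabilizer G u) w).symm
  have hmem := Finset.eq_of_subset_of_card_le hsub hle ▸ Finset.mem_compl.2 hv
  exact (Finset.mem_filter.1 hmem).2

theorem eq_univ_of_stabilizer_eq_top {u : Finset G} (hu : u.Nonempty)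
    (h : stabilizer G u = ⊤) : u = Finset.univ := by
  obtain ⟨x, hx⟩ := hu
  refine Finset.eq_univ_of_forall fun y => ?_
  have hmem : y - x ∈ stabilizer G u := h ▸ AddSubgroup.mem_top _
  simpa using (AddAction.mem_stabilizer_finset.1 hmem x).2 hx

end

section
variable {G : Type*} [AddCommGroup G] [Fintype G] [DecidableEq G] {n : ℕ} {s t : Finset G}

theorem exists_subset_add_four_mul_card_le (hG : Nat.card G = 5 ^ n)
    (hs : 2 * Nat.card G < 5 * #s) (ht : 2 * Nat.card G < 5 * #t) (hst : s + t ≠ Finset.univ) :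
    ∃ u ⊆ s + t, 5 ∣ (stabilizer G u).index ∧ 4 * Nat.card G ≤ 5 * #u ∧
      #s + #t ≤ #u + Nat.card (stabilizer G u) := by
  obtain ⟨u, hsub, hu, hcard⟩ := exists_subset_add_card_add_card_le
    (Finset.card_pos.1 (by omega : 0 < #s)) (Finset.card_pos.1 (by omega : 0 < #t))
  have hindex : 5 ∣ (stabilizer G u).index := by
    obtain ⟨j, -, hj⟩ := (Nat.dvd_prime_pow Nat.prime_five).1 (hG ▸ (stabilizer G u).index_dvd_card)
    rw [hj]
    refine dvd_pow_self 5 fun hj0 => hst ?_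
    have htop := AddSubgroup.index_eq_one.1 (hj.trans (by rw [hj0, pow_zero]))
    exact Finset.univ_subset_iff.1 (eq_univ_of_stabilizer_eq_top hu htop ▸ hsub)
  refine ⟨u, hsub, hindex, ?_, hcard⟩
  obtain ⟨r, hr⟩ := hindex
  obtain ⟨c, hc⟩ := card_stabilizer_dvd_card u
  have hGr := (stabilizer G u).card_mul_index
  rw [hr] at hGr
  have hlt : 4 * r < c + 1 := by
    refine lt_of_mul_lt_mul_left' (a := Nat.card (stabilizer G u)) ?_
    linarith
  have hle := Nat.mul_le_mul_left (Nat.card (stabilizer G u)) (Nat.le_of_lt_succ hlt)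
  linarith

theorem five_mul_card_compl_add_le (hG : Nat.card G = 5 ^ n)
    (hs : 2 * Nat.card G < 5 * #s) (ht : 2 * Nat.card G < 5 * #t) :
    5 * #(s + t)ᶜ ≤ Nat.card G := by
  rcases eq_or_ne (s + t) Finset.univ with h | h
  · simp [h]
  obtain ⟨u, hsub, -, hu, -⟩ := exists_subset_add_four_mul_card_le hG hs ht h
  have hle := Finset.card_le_card hsub
  have hcompl := Finset.card_add_card_compl (s + t)
  rw [← Nat.card_eq_fintype_card] at hcompl
  omega

theorem card_add_card_add_two_mul_card_compl_add_le_of_index_eq_five {u : Finset G}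
    (hs : 2 * Nat.card G < 5 * #s) (ht : 2 * Nat.card G < 5 * #t) (hst : s + t ≠ Finset.univ)
    (hsub : u ⊆ s + t) (hindex : (stabilizer G u).index = 5) (hu : 4 * Nat.card G ≤ 5 * #u) :
    5 * (#s + #t + 2 * #(s + t)ᶜ) ≤ 6 * Nat.card G := by
  have hG := (stabilizer G u).card_mul_index
  rw [hindex] at hG
  have hcompl := Finset.card_add_card_compl u
  rw [← Nat.card_eq_fintype_card] at hcompl
  obtain ⟨w, hw⟩ : ∃ w, w ∉ s + t := by simpa [Finset.eq_univ_iff_forall] using hst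
  obtain ⟨a, ha, b, hb, hab⟩ := exists_sub_add_mem_of_index_le (stabilizer G u) (s := s) (t := t)
    (i := 2) (j := 2) (by omega) (by omega) hindex.le w
  have hcoset : ∀ v ∉ s + t, v - (a + b) ∈ stabilizer G u := fun v hv => by
    have hvw : v - w ∈ stabilizer G u :=
      sub_mem_stabilizer_of_card_compl_le (by omega) (fun h => hv (hsub h)) fun h => hw (hsub h)
    simpa using add_mem hvw hab
  have := card_add_card_add_two_mul_card_compl_add_le ha hb hw hcoset
  omega

theorem card_add_card_add_card_compl_add_le (hG : Nat.card G = 5 ^ n)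
    (hs : 2 * Nat.card G < 5 * #s) (ht : 2 * Nat.card G < 5 * #t) (hst : s + t ≠ Finset.univ) :
    25 * (#s + #t + #(s + t)ᶜ) ≤ 26 * Nat.card G ∨
      5 * (#s + #t + 2 * #(s + t)ᶜ) ≤ 6 * Nat.card G := by
  obtain ⟨u, hsub, hdvd, hu, hcard⟩ := exists_subset_add_four_mul_card_le hG hs ht hst
  have hindex : (stabilizer G u).index = 5 ∨ 25 ≤ (stabilizer G u).index := by
    obtain ⟨j, -, hj⟩ := (Nat.dvd_prime_pow Nat.prime_five).1 (hG ▸ (stabilizer G u).index_dvd_card)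
    rw [hj] at hdvd ⊢
    rcases j with _ | _ | j
    · norm_num at hdvd
    · exact Or.inl rfl
    · exact Or.inr (Nat.pow_le_pow_right (n := 5) (by norm_num) (by omega : 2 ≤ j + 2))
  rcases hindex with h5 | h25
  · exact Or.inr
      (card_add_card_add_two_mul_card_compl_add_le_of_index_eq_five hs ht hst hsub h5 hu)
  · left
    have hindexG := (stabilizer G u).card_mul_index
    have hstab := Nat.mul_le_mul_left (Nat.card (stabilizer G u)) h25
    have hle := Finset.card_le_card hsub
    have hcompl := Finset.card_add_card_compl (s + t)
    rw [← Nat.card_eq_fintype_card] at hcompl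
    omega

theorem five_mul_card_le_of_card_le_card_compl_add {r : Finset G} (hG : Nat.card G = 5 ^ n)
    (hs : 2 * Nat.card G < 5 * #s) (ht : 2 * Nat.card G < 5 * #t) (hr : #r ≤ #(s + t)ᶜ) :
    5 * #r ≤ Nat.card G :=
  (Nat.mul_le_mul_left 5 hr).trans (five_mul_card_compl_add_le hG hs ht)

theorem eq_four_of_card_le_card_compl_add {X : ℕ → Finset G} {j : ℕ} (hG : Nat.card G = 5 ^ n)
    (hj : j < 5) (hX : ∀ p q r, p + q + r = j → #(X r) ≤ #(X p + X q)ᶜ)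
    (h0 : 2 * Nat.card G < 5 * #(X 0)) (h1 : 2 * Nat.card G < 5 * #(X 1)) : j = 4 := by
  by_contra hj4
  interval_cases j
  · have := five_mul_card_le_of_card_le_card_compl_add hG h0 h0 (hX 0 0 0 rfl)
    omega
  · have := five_mul_card_le_of_card_le_card_compl_add hG h0 h0 (hX 0 0 1 rfl)
    omega
  · have := five_mul_card_le_of_card_le_card_compl_add hG h0 h1 (hX 0 1 1 rfl)
    omega
  · have := five_mul_card_le_of_card_le_card_compl_add hG h1 h1 (hX 1 1 1 rfl)
    omega
  · exact hj4 rfl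

theorem card_add_le_card_of_card_le_card_compl_add {r : Finset G} (hr : #r ≤ #(s + t)ᶜ)
    (hr0 : #r ≠ 0) : #s + #t ≤ Nat.card G := by
  contrapose! hr0
  simpa [Finset.eq_univ_of_forall (mem_add_of_card_lt hr0)] using hr

theorem two_mul_sum_card_le {X : ℕ → Finset G} (hG : Nat.card G = 5 ^ n)
    (hX : ∀ p q r, p + q + r = 4 → #(X r) ≤ #(X p + X q)ᶜ)
    (h0 : 2 * Nat.card G < 5 * #(X 0)) (h1 : 2 * Nat.card G < 5 * #(X 1))
    (h0' : 4 * #(X 0) ≤ 3 * Nat.card G) (h1' : 4 * #(X 1) ≤ 3 * Nat.card G) :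
    2 * ∑ i ∈ Finset.range 5, #(X i) ≤ 3 * Nat.card G := by
  have h2 := five_mul_card_le_of_card_le_card_compl_add hG h1 h1 (hX 1 1 2 rfl)
  have h4 := five_mul_card_le_of_card_le_card_compl_add hG h0 h0 (hX 0 0 4 rfl)
  simp only [Finset.sum_range_succ, Finset.sum_range_zero]
  rcases eq_or_ne #(X 3) 0 with h3 | h3
  · have h00 := card_add_le_card_of_card_le_card_compl_add (hX 0 0 4 rfl)
    have h11 := card_add_le_card_of_card_le_card_compl_add (hX 1 1 2 rfl)
    omega
  · have hX3 := hX 0 1 3 rfl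
    have hne : X 0 + X 1 ≠ Finset.univ := fun h => h3 <| by simpa [h] using hX3
    have h01 := card_add_le_card_of_card_le_card_compl_add hX3 h3
    have h013 : 10 * (#(X 0) + #(X 1) + #(X 3)) ≤ 11 * Nat.card G := by
      have := card_add_card_add_card_compl_add_le hG h0 h1 hne
      omega
    omega

end

theorem mem_itSum_three {G : Type*} [AddCommGroup G] {A : Set G} {x y z : G} (hx : x ∈ A)
    (hy : y ∈ A) (hz : z ∈ A) : x + y + z ∈ itSum 3 A :=
  Set.add_mem_add (Set.add_mem_add ⟨0, rfl, x, hx, zero_add x⟩ hy) hz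

theorem exists_lt_sub_nsmul_mem {G : Type*} [AddCommGroup G] {F : AddSubgroup G} {p : ℕ}
    [hp : Fact p.Prime] (hF : F.index = p) {d : G} (hd : d ∉ F) (x : G) :
    ∃ i < p, x - i • d ∈ F := by
  classical
  have : Finite (G ⧸ F) := Nat.finite_of_card_ne_zero (hF.trans_ne hp.out.ne_zero)
  have hd' : (d : G ⧸ F) ≠ 0 := by rwa [Ne, QuotientAddGroup.eq_zero_iff]
  have hx := mem_multiples_of_prime_card (g' := (x : G ⧸ F)) hF hd'
  obtain ⟨i, hi, hix⟩ := Finset.mem_image.1 (mem_multiples_iff_mem_range_addOrderOf.1 hx)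
  refine ⟨i, (Finset.mem_range.1 hi).trans_le (hF ▸ addOrderOf_le_card), ?_⟩
  exact QuotientAddGroup.eq_iff_sub_mem.1 hix.symm

section
variable {G : Type*} [AddCommGroup G] [Finite G] {F : AddSubgroup G} {A : Set G}

/-- The part of `A` in the coset `c + F`, translated by `-c` to a finset of the group `F`; sumsets
of parts of `A` in different cosets of `F` can thus be studied inside the single group `F`. -/
noncomputable def cosetSlice (F : AddSubgroup G) (A : Set G) (c : G) : Finset F :=
  (Set.toFinite {f : F | c + f ∈ A}).toFinset

theorem mem_cosetSlice {c : G} {f : F} : f ∈ cosetSlice F A c ↔ c + f ∈ A := by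
  simp [cosetSlice]

theorem card_cosetSlice (F : AddSubgroup G) (A : Set G) (c : G) :
    #(cosetSlice F A c) = (A ∩ (c +ᵥ (F : Set G))).ncard := by
  have himage : A ∩ (c +ᵥ (F : Set G)) = (fun f : F => c + f) '' cosetSlice F A c := by
    ext x
    constructor
    · rintro ⟨hx, f, hf, rfl⟩
      exact ⟨⟨f, hf⟩, mem_cosetSlice.2 hx, rfl⟩
    · rintro ⟨f, hf, rfl⟩
      exact ⟨mem_cosetSlice.1 hf, f, f.2, rfl⟩
  rw [himage, Set.ncard_image_of_injective _ fun _ _ h => Subtype.ext (add_left_cancel h),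
    Set.ncard_coe_finset]

theorem card_cosetSlice_le_card_compl_add [Fintype F] [DecidableEq F] {a b c g : G}
    (hg : g ∉ itSum 3 A) (hF : g - (a + b + c) ∈ F) :
    #(cosetSlice F A c) ≤ #(cosetSlice F A a + cosetSlice F A b)ᶜ := by
  refine Finset.card_le_card_of_injOn (⟨_, hF⟩ - ·) (fun z hz => ?_) sub_right_injective.injOn
  refine Finset.mem_coe.2 (Finset.mem_compl.2 fun hmem => hg ?_)
  obtain ⟨x, hx, y, hy, hxy⟩ := Finset.mem_add.1 hmem
  convert mem_itSum_three (mem_cosetSlice.1 hx) (mem_cosetSlice.1 hy) (mem_cosetSlice.1 hz) using 1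
  have hxy' : (x : G) + y = g - (a + b + c) - z := congrArg Subtype.val hxy
  rw [add_add_add_comm a, hxy']
  abel

theorem ncard_le_sum_card_cosetSlice {p : ℕ} [Fact p.Prime] (hF : F.index = p) {d : G}
    (hd : d ∉ F) (c : G) :
    A.ncard ≤ ∑ i ∈ Finset.range p, #(cosetSlice F A (c + i • d)) := by
  have hcover : A ⊆ ⋃ i ∈ Finset.range p, A ∩ ((c + i • d) +ᵥ (F : Set G)) := by
    intro x hx
    obtain ⟨i, hi, hxi⟩ := exists_lt_sub_nsmul_mem hF hd (x - c)
    refine Set.mem_biUnion (Finset.mem_coe.2 (Finset.mem_range.2 hi)) ⟨hx, _, hxi, ?_⟩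
    simp [sub_sub]
  simp only [card_cosetSlice]
  exact (Set.ncard_le_ncard hcover).trans (Finset.set_ncard_biUnion_le _ _)

end

theorem stmt6_general {G : Type*} [AddCommGroup G] {n : ℕ} (hG : Nat.card G = 5 ^ n) (A : Set G)
    (hA : (A.ncard : ℝ) > 0.3 * Nat.card G) (h3A : itSum 3 A ≠ Set.univ)
    (F : AddSubgroup G) (hF : F.index = 5)
    (hdens : ∀ c : G, ((A ∩ (c +ᵥ (F : Set G))).ncard : ℝ) ≤ 0.75 * Nat.card F) (c₁ c₂ : G)
    (h₁ : ((A ∩ (c₁ +ᵥ (F : Set G))).ncard : ℝ) > 0.4 * Nat.card F)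
    (h₂ : ((A ∩ (c₂ +ᵥ (F : Set G))).ncard : ℝ) > 0.4 * Nat.card F) :
    c₁ - c₂ ∈ F := by
  classical
  have : Finite G := Nat.finite_of_card_ne_zero (by simp [hG])
  have := Fintype.ofFinite F
  have : Fact (Nat.Prime 5) := ⟨Nat.prime_five⟩
  by_contra hnot
  have hd : c₂ - c₁ ∉ F := by rwa [← neg_sub, neg_mem_iff] at hnot
  obtain ⟨g, hg⟩ := (Set.ne_univ_iff_exists_notMem _).1 h3A
  obtain ⟨j, hj, hgj⟩ := exists_lt_sub_nsmul_mem hF hd (g - 3 • c₁)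
  obtain ⟨k, -, hk⟩ := (Nat.dvd_prime_pow Nat.prime_five).1 (hG ▸ F.card_addSubgroup_dvd_card)
  rw [← F.card_mul_index, hF] at hA
  simp only [← card_cosetSlice] at hdens h₁ h₂
  let X (i : ℕ) : Finset F := cosetSlice F A (c₁ + i • (c₂ - c₁))
  have hX : ∀ p q r, p + q + r = j → #(X r) ≤ #(X p + X q)ᶜ := fun p q r hpqr =>
    card_cosetSlice_le_card_compl_add hg <| by
      convert hgj using 1
      rw [← hpqr]
      module
  have h0 : 2 * Nat.card F < 5 * #(X 0) := by
    simp only [X, zero_nsmul, add_zero]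
    rify
    linarith
  have h1 : 2 * Nat.card F < 5 * #(X 1) := by
    simp only [X, one_nsmul, add_sub_cancel]
    rify
    linarith
  have hX_le (i : ℕ) : 4 * #(X i) ≤ 3 * Nat.card F := by
    have := hdens (c₁ + i • (c₂ - c₁))
    rify
    linarith
  obtain rfl : j = 4 := eq_four_of_card_le_card_compl_add hk hj hX h0 h1
  have hsum := two_mul_sum_card_le hk hX h0 h1 (hX_le 0) (hX_le 1)
  have hle := ncard_le_sum_card_cosetSlice (A := A) hF hd c₁
  rify at hsum hle
  push_cast at hA
  linarith

/-- Let `A ⊆ (ℤ/5ℤ)ⁿ` with `|A| > 0.3·5ⁿ` and `3A ≠ G`, and let `F` be an index-5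
subgroup with the density of `A` in every `F`-coset smaller than `0.5`. Then there is
at most one `F`-coset in which the density of `A` is larger than `0.4`. -/
theorem stmt6 (n : ℕ) (hn : 1 ≤ n) (A : Set (Fin n → ZMod 5))
    (hA : (A.ncard : ℝ) > 0.3 * 5 ^ n)
    (h3A : itSum 3 A ≠ Set.univ)
    (F : AddSubgroup (Fin n → ZMod 5)) (hF : F.index = 5)
    (hdens : ∀ c : Fin n → ZMod 5,
      ((A ∩ (c +ᵥ (F : Set (Fin n → ZMod 5)))).ncard : ℝ) < 0.5 * Nat.card F) :
    ∀ c₁ c₂ : Fin n → ZMod 5,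
      ((A ∩ (c₁ +ᵥ (F : Set (Fin n → ZMod 5)))).ncard : ℝ) > 0.4 * Nat.card F →
      ((A ∩ (c₂ +ᵥ (F : Set (Fin n → ZMod 5)))).ncard : ℝ) > 0.4 * Nat.card F →
      c₁ - c₂ ∈ F :=
  stmt6_general (n := n) (by simp) A (by simpa using hA) h3A F hF fun c =>
    (hdens c).le.trans (by gcongr; norm_num)
end

section
/- For any finite abelian group G and integer k ≥ 1, M_k(G) = max{ |H| · N_k(G/H) : H a subgroup of G }. -/
open Pointwise

/-- `Mk G k` is the largest size of a subset `A ⊆ G` with `kA ≠ G`. -/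
noncomputable def Mk (G : Type*) [AddCommGroup G] (k : ℕ) : ℕ :=
  sSup {m : ℕ | ∃ A : Set G, itSum k A ≠ Set.univ ∧ m = A.ncard}

/-- `Nk G k` is the largest size of an aperiodic subset `A ⊆ G` with `kA ≠ G` which is
maximal with this property; `0` if no such subset exists. -/
noncomputable def Nk (G : Type*) [AddCommGroup G] (k : ℕ) : ℕ :=
  sSup {m : ℕ | ∃ A : Set G,
    {g : G | g +ᵥ A = A} = {0} ∧
    itSum k A ≠ Set.univ ∧
    (∀ g ∉ A, itSum k (A ∪ {g}) = Set.univ) ∧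
    m = A.ncard}

/-!
Under a surjective homomorphism, a sum of preimages is the preimage of the sum. So for `k ≥ 1` a set
`B ⊆ G ⧸ H` with `kB ≠ G ⧸ H` pulls back to a set `A ⊆ G` with `kA ≠ G` and `|A| = |H| |B|`; hence
`|H| N_k(G ⧸ H) ≤ |H| M_k(G ⧸ H) ≤ M_k(G)`. Conversely, a set `A` of largest size with `kA ≠ G` is
inclusion-maximal, and it is the preimage of its image in the quotient by its period `H`. That
image is again maximal, and now aperiodic, so `|A| ≤ |H| N_k(G ⧸ H)`.
-/

section Sumset

variable {G G' : Type*} [AddCommGroup G] [AddCommGroup G'] {k : ℕ}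

theorem itSum_mono (k : ℕ) : Monotone (itSum k : Set G → Set G) := by
  intro A B hAB
  induction k with
  | zero => exact subset_rfl
  | succ k ih => exact Set.add_subset_add ih hAB

theorem itSum_empty (hk : 1 ≤ k) : itSum k (∅ : Set G) = ∅ := by
  obtain ⟨k, rfl⟩ := Nat.exists_eq_add_of_le' hk
  exact Set.add_empty

theorem preimage_add_of_surjective {f : G →+ G'} (hf : Function.Surjective f) (B C : Set G') :
    f ⁻¹' (B + C) = f ⁻¹' B + f ⁻¹' C := by
  refine subset_antisymm ?_ (Set.preimage_add_preimage_subset f)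
  rintro x ⟨b, hb, c, hc, hbc⟩
  obtain ⟨y, rfl⟩ := hf b
  have hxy : f (x - y) = c := by rw [map_sub, ← hbc, add_sub_cancel_left]
  exact ⟨y, hb, x - y, by rwa [Set.mem_preimage, hxy], add_sub_cancel y x⟩

theorem itSum_preimage {f : G →+ G'} (hf : Function.Surjective f) (hk : 1 ≤ k) (B : Set G') :
    itSum k (f ⁻¹' B) = f ⁻¹' itSum k B := by
  induction k, hk using Nat.le_induction with
  | base => simp only [itSum, Set.singleton_zero, zero_add]
  | succ k _ ih => rw [itSum, itSum, ih, preimage_add_of_surjective hf]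

theorem itSum_preimage_eq_univ_iff {f : G →+ G'} (hf : Function.Surjective f) (hk : 1 ≤ k)
    {B : Set G'} : itSum k (f ⁻¹' B) = Set.univ ↔ itSum k B = Set.univ := by
  rw [itSum_preimage hf hk, ← hf.preimage_injective.eq_iff (b := Set.univ), Set.preimage_univ]

theorem maximal_itSum_ne_univ_iff {A : Set G} :
    Maximal (itSum k · ≠ Set.univ) A ↔
      itSum k A ≠ Set.univ ∧ ∀ g ∉ A, itSum k (A ∪ {g}) = Set.univ := by
  have antitone_ne_univ ⦃B C : Set G⦄ (hC : itSum k C ≠ Set.univ) (hBC : B ⊆ C) :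
      itSum k B ≠ Set.univ :=
    fun hB ↦ hC (Set.univ_subset_iff.mp (hB.symm.subset.trans (itSum_mono k hBC)))
  simp only [Set.maximal_iff_forall_insert antitone_ne_univ, not_not, Set.union_singleton]

theorem maximal_itSum_ne_univ_of_preimage {f : G →+ G'} (hf : Function.Surjective f) (hk : 1 ≤ k)
    {B : Set G'} (hB : Maximal (itSum k · ≠ Set.univ) (f ⁻¹' B)) :
    Maximal (itSum k · ≠ Set.univ) B := by
  have ne_univ_iff (C : Set G') : itSum k (f ⁻¹' C) ≠ Set.univ ↔ itSum k C ≠ Set.univ :=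
    (itSum_preimage_eq_univ_iff hf hk).not
  refine ⟨(ne_univ_iff B).mp hB.prop, fun C hC hBC ↦ ?_⟩
  exact hf.preimage_subset_preimage_iff.mp
    (hB.le_of_ge ((ne_univ_iff C).mpr hC) (Set.preimage_mono hBC))

end Sumset

section Quotient

variable {G : Type*} [AddCommGroup G]

theorem ncard_preimage_mk' (H : AddSubgroup G) (B : Set (G ⧸ H)) :
    (QuotientAddGroup.mk' H ⁻¹' B).ncard = Nat.card H * B.ncard := by
  rw [← Nat.card_coe_set_eq, ← Nat.card_coe_set_eq, ← Nat.card_prod]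
  exact Nat.card_congr (QuotientAddGroup.preimageMkEquivAddSubgroupProdSet H B)

theorem preimage_image_mk'_stabilizer (A : Set G) :
    QuotientAddGroup.mk' (AddAction.stabilizer G A) ⁻¹'
      (QuotientAddGroup.mk' (AddAction.stabilizer G A) '' A) = A := by
  rw [QuotientAddGroup.coe_mk', QuotientAddGroup.preimage_image_mk_eq_add,
    AddAction.add_stabilizer_self]

end Quotient

section Extremal

theorem bddAbove_ncard_of_finite {α : Type*} [Finite α] (P : Set α → Prop) :
    BddAbove {m : ℕ | ∃ A, P A ∧ m = A.ncard} := by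
  refine ⟨Nat.card α, ?_⟩
  rintro _ ⟨A, -, rfl⟩
  exact Set.ncard_le_card A

variable {G : Type*} [AddCommGroup G] [Finite G] {k : ℕ}

theorem ncard_le_Mk {A : Set G} (hA : itSum k A ≠ Set.univ) : A.ncard ≤ Mk G k :=
  le_csSup (bddAbove_ncard_of_finite _) ⟨A, hA, rfl⟩

variable (G) in
theorem exists_maximal_ncard_eq_Mk (hk : 1 ≤ k) :
    ∃ A : Set G, Maximal (itSum k · ≠ Set.univ) A ∧ A.ncard = Mk G k := by
  have empty_ne_univ : itSum k (∅ : Set G) ≠ Set.univ := by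
    rw [itSum_empty hk]
    exact Set.empty_ne_univ
  obtain ⟨A, hA, hcard⟩ : Mk G k ∈ {m : ℕ | ∃ A : Set G, itSum k A ≠ Set.univ ∧ m = A.ncard} :=
    Nat.sSup_mem ⟨_, ∅, empty_ne_univ, rfl⟩ (bddAbove_ncard_of_finite _)
  refine ⟨A, ⟨hA, fun B hB hAB ↦ ?_⟩, hcard.symm⟩
  exact (Set.eq_of_subset_of_ncard_le hAB ((ncard_le_Mk hB).trans_eq hcard)).ge

variable (G k) in
theorem Nk_le_Mk : Nk G k ≤ Mk G k := by
  refine csSup_le_csSup' (bddAbove_ncard_of_finite _) ?_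
  rintro _ ⟨A, -, hA, -, rfl⟩
  exact ⟨A, hA, rfl⟩

theorem ncard_le_Nk {A : Set G} (hstab : AddAction.stabilizer G A = ⊥)
    (hA : Maximal (itSum k · ≠ Set.univ) A) : A.ncard ≤ Nk G k := by
  obtain ⟨hne, hinsert⟩ := maximal_itSum_ne_univ_iff.mp hA
  have hperiod : {g : G | g +ᵥ A = A} = {0} := congrArg SetLike.coe hstab
  refine le_csSup ⟨Nat.card G, ?_⟩ ⟨A, hperiod, hne, hinsert, rfl⟩
  rintro _ ⟨B, -, -, -, rfl⟩
  exact Set.ncard_le_card B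

theorem card_mul_Mk_quotient_le (H : AddSubgroup G) (hk : 1 ≤ k) :
    Nat.card H * Mk (G ⧸ H) k ≤ Mk G k := by
  obtain ⟨B, hB, hcard⟩ := exists_maximal_ncard_eq_Mk (G ⧸ H) hk
  rw [← hcard, ← ncard_preimage_mk']
  exact ncard_le_Mk <|
    (itSum_preimage_eq_univ_iff (QuotientAddGroup.mk'_surjective H) hk).not.mpr hB.prop

theorem card_mul_Nk_quotient_le (H : AddSubgroup G) (hk : 1 ≤ k) :
    Nat.card H * Nk (G ⧸ H) k ≤ Mk G k :=
  (Nat.mul_le_mul_left _ (Nk_le_Mk _ k)).trans (card_mul_Mk_quotient_le H hk)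

theorem ncard_le_card_stabilizer_mul_Nk {A : Set G} (hk : 1 ≤ k)
    (hA : Maximal (itSum k · ≠ Set.univ) A) :
    A.ncard ≤ Nat.card (AddAction.stabilizer G A) * Nk (G ⧸ AddAction.stabilizer G A) k := by
  set π := QuotientAddGroup.mk' (AddAction.stabilizer G A)
  have hpre : π ⁻¹' (π '' A) = A := preimage_image_mk'_stabilizer A
  have hmax : Maximal (itSum k · ≠ Set.univ) (π '' A) :=
    maximal_itSum_ne_univ_of_preimage (QuotientAddGroup.mk'_surjective _) hk (by rwa [hpre])
  calc
    A.ncard = (π ⁻¹' (π '' A)).ncard := by rw [hpre]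
    _ = Nat.card (AddAction.stabilizer G A) * (π '' A).ncard := ncard_preimage_mk' _ _
    _ ≤ _ := Nat.mul_le_mul_left _ (ncard_le_Nk (AddAction.stabilizer_image_coe_quotient A) hmax)

end Extremal

/-- For any finite abelian group `G` and `k ≥ 1`,
`M_k(G) = max { |H| · N_k(G/H) : H ≤ G }`. -/
theorem stmt7 (G : Type*) [AddCommGroup G] [Finite G] (k : ℕ) (hk : 1 ≤ k) :
    Mk G k = sSup {m : ℕ | ∃ H : AddSubgroup G, m = Nat.card H * Nk (G ⧸ H) k} := by
  refine (IsGreatest.csSup_eq ⟨?_, ?_⟩).symm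
  · obtain ⟨A, hA, hcard⟩ := exists_maximal_ncard_eq_Mk G hk
    refine ⟨AddAction.stabilizer G A, le_antisymm ?_ (card_mul_Nk_quotient_le _ hk)⟩
    exact hcard ▸ ncard_le_card_stabilizer_mul_Nk hk hA
  · rintro _ ⟨H, rfl⟩
    exact card_mul_Nk_quotient_le H hk
end

section
/- Let n ≥ 1 be an integer and G = (ℤ/5ℤ)^n. If A ⊆ G is a union of two distinct cosets of a subgroup of G of index 5, then 3A ≠ G, and moreover 3(A ∪ {g}) = G for every element g ∈ G∖A. -/
open Pointwise

/-!
Pass to the quotient by the subgroup, a group of prime order `p` with `k + 1 < p ≤ 2k` (for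
instance `p = 5` and `k = 3`), in which `A` becomes a pair `{a, b}`. The `k`-fold sums of a pair
are the `i a + j b` with `i + j = k`, at most `k + 1 < p` elements. Adding a point outside `A` turns
the pair into a triple, and Cauchy–Davenport gives at least `min p (2(k - 1) + 2) = p` classes
already for the sums of `k - 1` elements of the triple and one element of the pair. As `A` is a
union of cosets, a set containing `A` as a summand is determined by its image in the quotient.
-/

open Finset.HasAntidiagonal (antidiagonal mem_antidiagonal)

section AddGroup

variable {G H : Type*} [AddGroup G] [AddGroup H]

theorem min_minOrder_le_ncard_add {s t : Set G} (hs : s.Finite) (ht : t.Finite)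
    (hs₀ : s.Nonempty) (ht₀ : t.Nonempty) :
    min (AddMonoid.minOrder G) ↑(s.ncard + t.ncard - 1) ≤ ((s + t).ncard : ℕ∞) := by
  classical
  lift s to Finset G using hs
  lift t to Finset G using ht
  rw [← Finset.coe_add]
  simpa only [Set.ncard_coe_finset] using
    cauchy_davenport_minOrder_add (Finset.coe_nonempty.1 hs₀) (Finset.coe_nonempty.1 ht₀)

theorem card_le_minOrder_of_prime_card (hG : (Nat.card G).Prime) :
    (Nat.card G : ℕ∞) ≤ AddMonoid.minOrder G := by
  have : Fact (Nat.card G).Prime := ⟨hG⟩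
  exact AddMonoid.le_minOrder.2 fun a ha _ ↦
    (Nat.cast_le.2 (addOrderOf_eq_prime card_nsmul_eq_zero' ha).ge)

theorem add_preimage_eq_preimage_image_add (f : G →+ H) (s : Set G) (t : Set H) :
    s + f ⁻¹' t = f ⁻¹' (f '' s + t) := by
  ext x
  constructor
  · rintro ⟨y, hy, z, hz, rfl⟩
    exact ⟨f y, ⟨y, hy, rfl⟩, f z, hz, (map_add f y z).symm⟩
  · rintro ⟨_, ⟨y, hy, rfl⟩, z, hz, hyz⟩
    refine ⟨y, hy, -y + x, ?_, add_neg_cancel_left y x⟩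
    rwa [Set.mem_preimage, map_add, map_neg, ← hyz, neg_add_cancel_left]

theorem vadd_union_vadd_eq_preimage_mk (F : AddSubgroup G) (c₁ c₂ : G) :
    (c₁ +ᵥ (F : Set G)) ∪ (c₂ +ᵥ (F : Set G)) =
      ((↑) : G → G ⧸ F) ⁻¹' {(c₁ : G ⧸ F), (c₂ : G ⧸ F)} := by
  rw [← QuotientAddGroup.eq_class_eq_leftCoset, ← QuotientAddGroup.eq_class_eq_leftCoset]
  rfl

end AddGroup

variable {G H : Type*} [AddCommGroup G] [AddCommGroup H]

theorem image_itSum (f : G →+ H) (k : ℕ) (s : Set G) : f '' itSum k s = itSum k (f '' s) := by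
  induction k with
  | zero => simp only [itSum, Set.image_singleton, map_zero]
  | succ k ih => simp only [itSum, Set.image_add, ih]

theorem itSum_pair_subset (k : ℕ) (a b : G) :
    itSum k {a, b} ⊆ (fun ij : ℕ × ℕ ↦ ij.1 • a + ij.2 • b) '' antidiagonal k := by
  induction k with
  | zero => simp [itSum]
  | succ k ih =>
    rintro _ ⟨x, hx, y, hy, rfl⟩
    obtain ⟨⟨i, j⟩, hij, rfl⟩ := ih hx
    have hij : i + j = k := mem_antidiagonal.1 hij
    obtain rfl | rfl : y = a ∨ y = b := hy
    · refine ⟨(i + 1, j), ?_, by simp only [succ_nsmul]; abel⟩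
      exact mem_antidiagonal.2 (by omega)
    · refine ⟨(i, j + 1), ?_, by simp only [succ_nsmul]; abel⟩
      exact mem_antidiagonal.2 (by omega)

theorem ncard_itSum_pair_le (k : ℕ) (a b : G) : (itSum k {a, b}).ncard ≤ k + 1 :=
  calc (itSum k {a, b}).ncard
    _ ≤ ((fun ij : ℕ × ℕ ↦ ij.1 • a + ij.2 • b) '' antidiagonal k).ncard :=
      Set.ncard_le_ncard (itSum_pair_subset k a b) ((Finset.finite_toSet _).image _)
    _ ≤ (antidiagonal k : Set (ℕ × ℕ)).ncard := Set.ncard_image_le (Finset.finite_toSet _)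
    _ = k + 1 := by rw [Set.ncard_coe_finset, Finset.Nat.card_antidiagonal]

theorem min_minOrder_le_ncard_itSum_add {s t : Set G} (hs : s.Finite) (ht : t.Finite)
    (hs₀ : s.Nonempty) (ht₀ : t.Nonempty) (k : ℕ) :
    min (AddMonoid.minOrder G) ↑(k * (s.ncard - 1) + t.ncard) ≤ ((itSum k s + t).ncard : ℕ∞) := by
  induction k generalizing t with
  | zero => simp [itSum]
  | succ k ih =>
    have hst := min_minOrder_le_ncard_add hs ht hs₀ ht₀
    have hksum := ih (hs.add ht) (hs₀.add ht₀)
    have hs₁ : 0 < s.ncard := (Set.ncard_pos hs).2 hs₀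
    rw [itSum, add_assoc]
    rw [min_le_iff, Nat.cast_le] at hst hksum ⊢
    refine hksum.elim Or.inl fun hksum ↦ hst.imp (fun hst ↦ ?_) fun hst ↦ ?_
    · exact hst.trans (Nat.cast_le.2 (by omega))
    · rw [add_one_mul]; omega

theorem itSum_add_eq_univ_of_prime_card (hG : (Nat.card G).Prime) {s t : Set G}
    (hs₀ : s.Nonempty) (ht₀ : t.Nonempty) {k : ℕ}
    (hk : Nat.card G ≤ k * (s.ncard - 1) + t.ncard) : itSum k s + t = Set.univ := by
  have : Finite G := Nat.finite_of_card_ne_zero hG.ne_zero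
  have hcard : (Nat.card G : ℕ∞) ≤ (itSum k s + t).ncard :=
    (le_min (card_le_minOrder_of_prime_card hG) (Nat.cast_le.2 hk)).trans
      (min_minOrder_le_ncard_itSum_add s.toFinite t.toFinite hs₀ ht₀ k)
  refine Set.eq_of_subset_of_ncard_le (Set.subset_univ _) ?_
  rw [Set.ncard_univ]
  exact Nat.cast_le.1 hcard

theorem itSum_preimage_pair_ne_univ {f : G →+ H} (hf : Function.Surjective f) {k : ℕ}
    (hk : k + 1 < Nat.card H) (a b : H) : itSum k (f ⁻¹' {a, b}) ≠ Set.univ := by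
  intro huniv
  have hpair : itSum k {a, b} = Set.univ := by
    rw [← Set.image_preimage_eq {a, b} hf, ← image_itSum, huniv, Set.image_univ_of_surjective hf]
  have hcard := ncard_itSum_pair_le k a b
  rw [hpair, Set.ncard_univ] at hcard
  omega

theorem itSum_preimage_union_singleton_eq_univ (hH : (Nat.card H).Prime) {f : G →+ H}
    (hf : Function.Surjective f) {s : Set H} {k : ℕ}
    (hk : Nat.card H ≤ k * s.ncard) {g : G} (hg : f g ∉ s) :
    itSum k (f ⁻¹' s ∪ {g}) = Set.univ := by
  have : Finite H := Nat.finite_of_card_ne_zero hH.ne_zero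
  have hpos : 0 < k * s.ncard := hH.pos.trans_le hk
  have hs₀ : s.Nonempty := Set.nonempty_of_ncard_ne_zero (pos_of_mul_pos_right hpos k.zero_le).ne'
  obtain ⟨k, rfl⟩ : ∃ j, k = j + 1 := Nat.exists_eq_add_one.2 (Nat.pos_of_mul_pos_right hpos)
  have himage : f '' (f ⁻¹' s ∪ {g}) = insert (f g) s := by
    rw [Set.image_union, Set.image_preimage_eq s hf, Set.image_singleton, Set.union_singleton]
  have hquot : itSum k (insert (f g) s) + s = Set.univ := by
    refine itSum_add_eq_univ_of_prime_card hH (Set.insert_nonempty _ _) hs₀ ?_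
    rwa [Set.ncard_insert_of_notMem hg, Nat.add_sub_cancel, ← add_one_mul]
  refine Set.eq_univ_of_univ_subset ?_
  calc Set.univ
    _ = itSum k (f ⁻¹' s ∪ {g}) + f ⁻¹' s := by
      rw [add_preimage_eq_preimage_image_add, image_itSum, himage, hquot, Set.preimage_univ]
    _ ⊆ itSum (k + 1) (f ⁻¹' s ∪ {g}) := Set.add_subset_add_left Set.subset_union_left

theorem stmt8_general (F : AddSubgroup G) (hF : F.index.Prime) {k : ℕ} (hk : k + 1 < F.index)
    (hFk : F.index ≤ 2 * k) (c₁ c₂ : G) (hc : c₁ - c₂ ∉ F) (A : Set G)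
    (hA : A = (c₁ +ᵥ (F : Set G)) ∪ (c₂ +ᵥ (F : Set G))) :
    itSum k A ≠ Set.univ ∧ ∀ g ∉ A, itSum k (A ∪ {g}) = Set.univ := by
  have hne : (c₁ : G ⧸ F) ≠ c₂ := fun h ↦ hc (QuotientAddGroup.eq_iff_sub_mem.1 h)
  have hmk := QuotientAddGroup.mk'_surjective F
  rw [vadd_union_vadd_eq_preimage_mk] at hA
  subst hA
  refine ⟨itSum_preimage_pair_ne_univ hmk hk _ _, fun g hg ↦ ?_⟩
  refine itSum_preimage_union_singleton_eq_univ hF hmk ?_ hg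
  rwa [Set.ncard_pair hne, mul_comm]

/-- If `A ⊆ (ℤ/5ℤ)ⁿ` is a union of two distinct cosets of an index-5 subgroup, then
`3A ≠ G` and `3(A ∪ {g}) = G` for every `g ∈ G∖A`. -/
theorem stmt8 (n : ℕ) (hn : 1 ≤ n) (F : AddSubgroup (Fin n → ZMod 5))
    (hF : F.index = 5) (c₁ c₂ : Fin n → ZMod 5) (hc : c₁ - c₂ ∉ F)
    (A : Set (Fin n → ZMod 5))
    (hA : A = (c₁ +ᵥ (F : Set (Fin n → ZMod 5))) ∪ (c₂ +ᵥ (F : Set (Fin n → ZMod 5)))) :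
    itSum 3 A ≠ Set.univ ∧
    ∀ g ∉ A, itSum 3 (A ∪ {g}) = Set.univ :=
  stmt8_general F (hF.symm ▸ Nat.prime_five) (by omega) (by omega) c₁ c₂ hc A hA
end

section
/- Let n ≥ 2 be an integer and G = (ℤ/5ℤ)^n. Let H < G be a subgroup of index 5, let e ∈ G be an element with G = H ⊕ ⟨e⟩, and let S ⊆ H satisfy |S| = (|H|−1)/2 and 0 ∉ 2S. Set A := (H∖{0}) ∪ (e + S) ∪ {2e}. Then |A| = (3·5^(n-1) − 1)/2, 3A = G∖{4e}, and 4e ∈ 3(A ∪ {g}) for every g ∈ G∖A. -/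
open Pointwise

/-!
Write every element of `G` as `i • e + h` with `h ∈ H` and `i < 5`. The set `A` lives on the layers
`i = 0, 1, 2`, so `4 • e` can only arise from layers as `0 + 2 + 2` or `1 + 1 + 2`. The first needs
`0 ∈ H ∖ {0}` and the second `0 ∈ 2S`, so `4 • e ∉ 3A`. Everything else is reached because
`(H ∖ {0}) + S = H`. For maximality the only delicate layer is `i = 1`: since `S` is as large as
`S ∩ -S = ∅` allows, a missing `h` has `-h ∈ S` or `h + h = 0`, and accordingly
`(e + h) + (e - h) + 2e = 4e` or `2(e + h) + 2e = 4e`.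
-/

variable {G : Type*} [AddCommGroup G] {H : AddSubgroup G} {e : G} {S : Set G}

section Sumset

variable {A : Set G} {x : G}

lemma mem_itSum_two : x ∈ itSum 2 A ↔ ∃ a ∈ A, ∃ b ∈ A, a + b = x := by
  simp only [itSum, Set.singleton_zero, zero_add, Set.mem_add]

lemma mem_itSum_three_s9 : x ∈ itSum 3 A ↔ ∃ a ∈ A, ∃ b ∈ A, ∃ c ∈ A, a + b + c = x := by
  simp only [itSum, Set.singleton_zero, zero_add, Set.mem_add, exists_exists_and_exists_and_eq_and]

lemma zero_notMem_itSum_two_iff : 0 ∉ itSum 2 A ↔ Disjoint A (-A) := by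
  simp only [mem_itSum_two, Set.disjoint_left, Set.mem_neg, not_exists, not_and]
  refine ⟨fun hA a ha hna ↦ hA a ha (-a) hna (add_neg_cancel a), fun hA a ha b hb hab ↦ hA ha ?_⟩
  rwa [neg_eq_of_add_eq_zero_right hab]

end Sumset

section DisjointNeg

lemma subset_sdiff_zero_of_disjoint_neg (hSH : S ⊆ H) (hS : Disjoint S (-S)) :
    S ⊆ (H : Set G) \ {0} := by
  refine Set.subset_sdiff_singleton hSH fun h0 ↦ Set.disjoint_left.1 hS h0 ?_
  rwa [Set.mem_neg, neg_zero]

lemma ncard_sdiff_zero (H : AddSubgroup G) : ((H : Set G) \ {0}).ncard = Nat.card H - 1 := by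
  rw [Set.ncard_sdiff_singleton_of_mem H.zero_mem]
  rfl

lemma ncard_le_of_disjoint_neg [Finite H] (hSH : S ⊆ H) (hS : Disjoint S (-S)) :
    S.ncard ≤ (Nat.card H - 1) / 2 := by
  have hfin : (H : Set G).Finite := Set.toFinite _
  have hneg : -S ⊆ H := fun x hx ↦ by simpa using hSH hx
  have hunion : S ∪ -S ⊆ (H : Set G) \ {0} :=
    Set.union_subset (subset_sdiff_zero_of_disjoint_neg hSH hS)
      (subset_sdiff_zero_of_disjoint_neg hneg (by simpa using hS.symm))
  have hle := Set.ncard_le_ncard hunion hfin.sdiff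
  rw [Set.ncard_union_eq hS (hfin.subset hSH) (hfin.subset hneg), Set.ncard_neg,
    ncard_sdiff_zero] at hle
  omega

lemma add_self_eq_zero_or_mem_or_neg_mem [Finite H] (hSH : S ⊆ H) (hS : Disjoint S (-S))
    (hcard : S.ncard = (Nat.card H - 1) / 2) {h : G} (hh : h ∈ H) :
    h + h = 0 ∨ h ∈ S ∨ -h ∈ S := by
  by_contra! ⟨hadd, hmem, hneg⟩
  have hinsert : Disjoint (insert h S) (-insert h S) := by
    rw [Set.neg_insert, Set.disjoint_insert_left, Set.disjoint_insert_right]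
    refine ⟨?_, hneg, hS⟩
    rw [Set.mem_insert_iff, Set.mem_neg, eq_neg_iff_add_eq_zero]
    exact not_or.2 ⟨hadd, hneg⟩
  have hle := ncard_le_of_disjoint_neg (Set.insert_subset hh hSH) hinsert
  rw [Set.ncard_insert_of_notMem hmem ((Set.toFinite (H : Set G)).subset hSH)] at hle
  omega

lemma sdiff_zero_add_eq (hSH : S ⊆ H) (hS : S.Nontrivial) : ((H : Set G) \ {0}) + S = H := by
  refine Set.Subset.antisymm ?_ fun h hh ↦ ?_
  · rintro _ ⟨x, hx, s, hs, rfl⟩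
    exact H.add_mem hx.1 (hSH hs)
  · obtain ⟨s, hs, hsh⟩ := hS.exists_ne h
    exact ⟨h - s, ⟨H.sub_mem hh (hSH hs), sub_ne_zero.2 hsh.symm⟩, s, hs, sub_add_cancel h s⟩

end DisjointNeg

section Complement

lemma index_eq_card_of_isCompl {K : AddSubgroup G} (hHK : IsCompl H K) :
    H.index = Nat.card K := by
  rw [← AddSubgroup.relIndex_top_right, ← hHK.sup_eq_top, AddSubgroup.relIndex_sup_left,
    ← AddSubgroup.inf_relIndex_right, hHK.inf_eq_bot, AddSubgroup.relIndex_bot_left]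

lemma exists_nsmul_add_eq (he : Codisjoint H (AddSubgroup.zmultiples e))
    (hpos : 0 < addOrderOf e) (g : G) : ∃ i < addOrderOf e, ∃ h ∈ H, i • e + h = g := by
  classical
  obtain ⟨h, hh, z, hz, rfl⟩ := AddSubgroup.mem_sup.1 (he.eq_top ▸ AddSubgroup.mem_top g)
  have hfin : IsOfFinAddOrder e := addOrderOf_pos_iff.1 hpos
  rw [← hfin.mem_multiples_iff_mem_zmultiples, hfin.mem_multiples_iff_mem_range_addOrderOf] at hz
  obtain ⟨i, hi, rfl⟩ := Finset.mem_image.1 hz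
  exact ⟨i, Finset.mem_range.1 hi, h, hh, add_comm _ _⟩

lemma eq_and_eq_zero_of_nsmul_add_eq_nsmul (he : Disjoint H (AddSubgroup.zmultiples e))
    {i j : ℕ} (hi : i < addOrderOf e) (hj : j < addOrderOf e) {h : G} (hh : h ∈ H)
    (heq : i • e + h = j • e) : i = j ∧ h = 0 := by
  have hmultiple (k : ℕ) : k • e ∈ AddSubgroup.zmultiples e :=
    AddSubgroup.nsmul_mem_zmultiples e k
  obtain rfl : h = 0 := AddSubgroup.disjoint_def.1 he hh <| by
    rw [eq_sub_of_add_eq' heq]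
    exact sub_mem (hmultiple j) (hmultiple i)
  exact ⟨nsmul_injOn_Iio_addOrderOf hi hj (by simpa using heq), rfl⟩

lemma nsmul_notMem_of_lt_addOrderOf (he : Disjoint H (AddSubgroup.zmultiples e)) {i : ℕ}
    (hi0 : i ≠ 0) (hi : i < addOrderOf e) : i • e ∉ H := fun hmem ↦
  nsmul_ne_zero_of_lt_addOrderOf hi0 hi
    (AddSubgroup.disjoint_def.1 he hmem (AddSubgroup.nsmul_mem_zmultiples e i))

end Complement

/-- The set `A` of the theorem: it meets the cosets `H`, `e + H` and `2e + H` in `H ∖ {0}`, `e + S`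
and `{2e}` respectively. -/
def layeredSet (H : AddSubgroup G) (e : G) (S : Set G) : Set G :=
  ((H : Set G) \ {0}) ∪ (e +ᵥ S) ∪ {2 • e}

namespace layeredSet

lemma mem_of_mem_sdiff {h : G} (hh : h ∈ (H : Set G) \ {0}) : h ∈ layeredSet H e S :=
  Or.inl (Or.inl hh)

lemma add_mem_of_mem {s : G} (hs : s ∈ S) : e + s ∈ layeredSet H e S :=
  Or.inl (Or.inr (Set.vadd_mem_vadd_set hs))

lemma two_nsmul_mem : 2 • e ∈ layeredSet H e S :=
  Or.inr rfl

lemma exists_eq_nsmul_add (hSH : S ⊆ H) {x : G} (hx : x ∈ layeredSet H e S) :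
    ∃ i : ℕ, ∃ h ∈ H, x = i • e + h ∧ (i = 0 ∧ h ≠ 0 ∨ i = 1 ∧ h ∈ S ∨ i = 2 ∧ h = 0) := by
  rcases hx with (⟨hxH, hx0⟩ | ⟨s, hs, rfl⟩) | rfl
  · exact ⟨0, x, hxH, by simp, .inl ⟨rfl, hx0⟩⟩
  · exact ⟨1, s, hSH hs, by simp, .inr (.inl ⟨rfl, hs⟩)⟩
  · exact ⟨2, 0, H.zero_mem, by simp, .inr (.inr ⟨rfl, rfl⟩)⟩

lemma ncard_eq [Finite H] (hSH : S ⊆ H) (he : e ∉ H) (h2e : 2 • e ∉ H) :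
    (layeredSet H e S).ncard = Nat.card H + S.ncard := by
  have hfin : (H : Set G).Finite := Set.toFinite _
  have hvfin : (e +ᵥ S).Finite := (hfin.subset hSH).image _
  have hH_add : Disjoint ((H : Set G) \ {0}) (e +ᵥ S) := by
    rw [Set.disjoint_right]
    rintro _ ⟨s, hs, rfl⟩ hmem
    exact he ((H.add_mem_cancel_right (hSH hs)).1 hmem.1)
  have htwo : 2 • e ∉ ((H : Set G) \ {0}) ∪ (e +ᵥ S) := by
    rintro (hmem | ⟨s, hs, hse⟩)
    · exact h2e hmem.1
    · have hs_eq : s = e := add_left_cancel (hse.trans (two_nsmul e))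
      exact he (hs_eq ▸ hSH hs)
  rw [layeredSet, Set.union_singleton, Set.ncard_insert_of_notMem htwo (hfin.sdiff.union hvfin),
    Set.ncard_union_eq hH_add hfin.sdiff hvfin, ncard_sdiff_zero, Set.ncard_vadd_set]
  have hpos : 0 < Nat.card H := Nat.card_pos
  omega

lemma two_nsmul_notMem_add (hSH : S ⊆ H) (hS : Disjoint S (-S))
    (he : Disjoint H (AddSubgroup.zmultiples e)) (horder : 4 < addOrderOf e) :
    2 • e ∉ layeredSet H e S + layeredSet H e S := by
  rintro ⟨x, hx, y, hy, hxy⟩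
  obtain ⟨i, h, hh, rfl, hi⟩ := exists_eq_nsmul_add hSH hx
  obtain ⟨j, k, hk, rfl, hj⟩ := exists_eq_nsmul_add hSH hy
  obtain ⟨hij, hhk⟩ : i + j = 2 ∧ h + k = 0 :=
    eq_and_eq_zero_of_nsmul_add_eq_nsmul he (by omega) (by omega) (H.add_mem hh hk)
      (by rw [← hxy]; module)
  rcases hi with ⟨rfl, h0⟩ | ⟨rfl, hhS⟩ | ⟨rfl, rfl⟩
  · have hk0 : k = 0 := by grind
    exact h0 (by rwa [hk0, add_zero] at hhk)
  · have hkS : k ∈ S := by grind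
    exact zero_notMem_itSum_two_iff.2 hS (mem_itSum_two.2 ⟨h, hhS, k, hkS, hhk⟩)
  · have hk0 : k ≠ 0 := by grind
    exact hk0 (by rwa [zero_add] at hhk)

lemma four_nsmul_notMem_itSum_three (hSH : S ⊆ H) (hS : Disjoint S (-S))
    (he : Disjoint H (AddSubgroup.zmultiples e)) (horder : 4 < addOrderOf e) :
    4 • e ∉ itSum 3 (layeredSet H e S) := by
  rw [mem_itSum_three_s9]
  rintro ⟨x, hx, y, hy, z, hz, hsum⟩
  have ne_two_nsmul {a b c : G} (hb : b ∈ layeredSet H e S) (hc : c ∈ layeredSet H e S)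
      (habc : a + b + c = 4 • e) : a ≠ 2 • e := by
    rintro rfl
    refine two_nsmul_notMem_add hSH hS he horder ⟨b, hb, c, hc, ?_⟩
    linear_combination (norm := module) habc
  have layer_le_one {a : G} (ha : a ∈ layeredSet H e S) (ha2 : a ≠ 2 • e) :
      ∃ i ≤ 1, ∃ h ∈ H, a = i • e + h := by
    obtain ⟨i, h, hh, rfl, ⟨rfl, -⟩ | ⟨rfl, -⟩ | ⟨rfl, rfl⟩⟩ := exists_eq_nsmul_add hSH ha
    · exact ⟨0, zero_le_one, h, hh, rfl⟩
    · exact ⟨1, le_rfl, h, hh, rfl⟩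
    · exact absurd (add_zero _) ha2
  obtain ⟨i, hi, h, hh, rfl⟩ := layer_le_one hx (ne_two_nsmul hy hz hsum)
  obtain ⟨j, hj, k, hk, rfl⟩ := layer_le_one hy (ne_two_nsmul hx hz (by rw [← hsum]; abel))
  obtain ⟨m, hm, l, hl, rfl⟩ := layer_le_one hz (ne_two_nsmul hx hy (by rw [← hsum]; abel))
  obtain ⟨hijm, -⟩ : i + j + m = 4 ∧ h + k + l = 0 :=
    eq_and_eq_zero_of_nsmul_add_eq_nsmul he (by omega) (by omega)
      (H.add_mem (H.add_mem hh hk) hl) (by rw [← hsum]; module)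
  omega

lemma nsmul_add_mem_itSum_three (hS : S ⊆ (H : Set G) \ {0}) (hnontriv : S.Nontrivial)
    {i : ℕ} (hi : i < 5) {h : G} (hh : h ∈ H) (hne : i • e + h ≠ 4 • e) :
    i • e + h ∈ itSum 3 (layeredSet H e S) := by
  have hcover := (sdiff_zero_add_eq (hS.trans Set.sdiff_subset) hnontriv).ge
  obtain ⟨x, hx, s, hs, hxs⟩ := Set.mem_add.1 (hcover hh)
  obtain ⟨y, hy, t, ht, hyt⟩ := Set.mem_add.1 (hcover hx.1)
  rw [mem_itSum_three_s9]
  interval_cases i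
  · exact ⟨y, mem_of_mem_sdiff hy, t, mem_of_mem_sdiff (hS ht), s, mem_of_mem_sdiff (hS hs),
      by rw [hyt, hxs, zero_nsmul, zero_add]⟩
  · exact ⟨y, mem_of_mem_sdiff hy, t, mem_of_mem_sdiff (hS ht), e + s, add_mem_of_mem hs,
      by rw [hyt, ← hxs]; module⟩
  · exact ⟨x, mem_of_mem_sdiff hx, s, mem_of_mem_sdiff (hS hs), 2 • e, two_nsmul_mem,
      by rw [hxs, add_comm]⟩
  · exact ⟨x, mem_of_mem_sdiff hx, e + s, add_mem_of_mem hs, 2 • e, two_nsmul_mem,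
      by rw [← hxs]; module⟩
  · have h0 : h ≠ 0 := by simpa using hne
    exact ⟨h, mem_of_mem_sdiff ⟨hh, h0⟩, 2 • e, two_nsmul_mem, 2 • e, two_nsmul_mem, by module⟩

lemma four_nsmul_mem_itSum_three_union (hS : S ⊆ (H : Set G) \ {0}) (hnontriv : S.Nontrivial)
    {i : ℕ} (hi : i < 5) {h : G} (hh : h ∈ H) (hmax : h + h = 0 ∨ h ∈ S ∨ -h ∈ S)
    (hg : i • e + h ∉ layeredSet H e S) :
    4 • e ∈ itSum 3 (layeredSet H e S ∪ {i • e + h}) := by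
  have hgmem : i • e + h ∈ layeredSet H e S ∪ {i • e + h} := Or.inr rfl
  have hcover := (sdiff_zero_add_eq (hS.trans Set.sdiff_subset) hnontriv).ge
  obtain ⟨x, hx, s, hs, hxs⟩ := Set.mem_add.1 (hcover (H.neg_mem hh))
  rw [mem_itSum_three_s9]
  interval_cases i
  · have h0 : h = 0 := by
      by_contra h0
      exact hg (by simpa using mem_of_mem_sdiff ⟨hh, h0⟩)
    exact ⟨_, hgmem, 2 • e, .inl two_nsmul_mem, 2 • e, .inl two_nsmul_mem, by rw [h0]; module⟩
  · rcases hmax with hadd | hmem | hneg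
    · exact ⟨_, hgmem, _, hgmem, 2 • e, .inl two_nsmul_mem,
        by linear_combination (norm := module) hadd⟩
    · exact absurd (by simpa using add_mem_of_mem hmem) hg
    · exact ⟨_, hgmem, e + -h, .inl (add_mem_of_mem hneg), 2 • e, .inl two_nsmul_mem, by module⟩
  · have h0 : h ≠ 0 := by
      rintro rfl
      exact hg (by simpa using two_nsmul_mem)
    exact ⟨_, hgmem, 2 • e, .inl two_nsmul_mem, -h,
      .inl (mem_of_mem_sdiff ⟨H.neg_mem hh, neg_ne_zero.2 h0⟩), by module⟩
  · exact ⟨_, hgmem, e + s, .inl (add_mem_of_mem hs), x, .inl (mem_of_mem_sdiff hx),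
      by linear_combination (norm := module) hxs⟩
  · exact ⟨_, hgmem, x, .inl (mem_of_mem_sdiff hx), s, .inl (mem_of_mem_sdiff (hS hs)),
      by linear_combination (norm := module) hxs⟩

end layeredSet

open layeredSet in
-- For even `|H|` both quotients are floors: `hScard` and `hS2` then say that `H` has exactly one
-- element of order two and `S` contains one of `h`, `-h` for every other nonzero `h ∈ H`.
theorem stmt9_general (hcard : 5 ≤ Nat.card H) (hH : H.index = 5)
    (he : IsCompl H (AddSubgroup.zmultiples e)) (hSH : S ⊆ H)
    (hScard : S.ncard = (Nat.card H - 1) / 2) (hS2 : 0 ∉ itSum 2 S) (A : Set G)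
    (hA : A = ((H : Set G) \ {0}) ∪ (e +ᵥ S) ∪ {2 • e}) :
    A.ncard = (3 * Nat.card H - 1) / 2 ∧
    itSum 3 A = Set.univ \ {4 • e} ∧
    ∀ g ∉ A, 4 • e ∈ itSum 3 (A ∪ {g}) := by
  obtain rfl : A = layeredSet H e S := hA
  have : Finite H := Nat.finite_of_card_ne_zero (by omega)
  have horder : addOrderOf e = 5 := by
    rw [← Nat.card_zmultiples, ← index_eq_card_of_isCompl he, hH]
  have hS : Disjoint S (-S) := zero_notMem_itSum_two_iff.1 hS2
  have hS0 := subset_sdiff_zero_of_disjoint_neg hSH hS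
  have hnontriv : S.Nontrivial := (Set.one_lt_ncard_iff_nontrivial_and_finite.1 (by omega)).1
  have hcoord (g : G) : ∃ i < 5, ∃ h ∈ H, i • e + h = g :=
    horder ▸ exists_nsmul_add_eq he.codisjoint (by omega) g
  have hnotMem {i : ℕ} (hi0 : i ≠ 0) (hi : i < 5) : i • e ∉ H :=
    nsmul_notMem_of_lt_addOrderOf he.disjoint hi0 (by omega)
  refine ⟨?_, ?_, fun g hg ↦ ?_⟩
  · rw [ncard_eq hSH (by simpa using hnotMem one_ne_zero) (hnotMem two_ne_zero (by omega)), hScard]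
    omega
  · ext g
    obtain ⟨i, hi, h, hh, rfl⟩ := hcoord g
    refine ⟨fun hmem ↦ ⟨trivial, fun h4 ↦ ?_⟩,
      fun hne ↦ nsmul_add_mem_itSum_three hS0 hnontriv hi hh hne.2⟩
    exact four_nsmul_notMem_itSum_three hSH hS he.disjoint (by omega) (h4 ▸ hmem)
  · obtain ⟨i, hi, h, hh, rfl⟩ := hcoord g
    exact four_nsmul_mem_itSum_three_union hS0 hnontriv hi hh
      (add_self_eq_zero_or_mem_or_neg_mem hSH hS hScard hh) hg

/-- Let `n ≥ 2`, `G = (ℤ/5ℤ)ⁿ`, `H < G` of index 5, `e ∈ G` with `G = H ⊕ ⟨e⟩`, and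
`S ⊆ H` with `|S| = (|H|−1)/2` and `0 ∉ 2S`. For `A := (H∖{0}) ∪ (e+S) ∪ {2e}` we have
`|A| = (3·5^(n-1)−1)/2`, `3A = G∖{4e}`, and `4e ∈ 3(A ∪ {g})` for every `g ∉ A`. -/
theorem stmt9 (n : ℕ) (hn : 2 ≤ n) (H : AddSubgroup (Fin n → ZMod 5))
    (hH : H.index = 5) (e : Fin n → ZMod 5)
    (he : IsCompl H (AddSubgroup.zmultiples e))
    (S : Set (Fin n → ZMod 5)) (hSH : S ⊆ (H : Set (Fin n → ZMod 5)))
    (hScard : S.ncard = (Nat.card H - 1) / 2)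
    (hS2 : (0 : Fin n → ZMod 5) ∉ itSum 2 S)
    (A : Set (Fin n → ZMod 5))
    (hA : A = ((H : Set (Fin n → ZMod 5)) \ {0}) ∪ (e +ᵥ S) ∪ {2 • e}) :
    A.ncard = (3 * 5 ^ (n - 1) - 1) / 2 ∧
    itSum 3 A = Set.univ \ {4 • e} ∧
    ∀ g ∉ A, 4 • e ∈ itSum 3 (A ∪ {g}) := by
  have hcard : Nat.card H = 5 ^ (n - 1) := by
    have hmul : Nat.card H * 5 = 5 ^ n := by
      simpa [hH] using H.card_mul_index
    rw [← pow_sub_one_mul (by omega) 5] at hmul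
    exact Nat.eq_of_mul_eq_mul_right (by decide) hmul
  have hle : 5 ≤ Nat.card H := hcard ▸ Nat.le_self_pow (by omega) 5
  exact hcard ▸ stmt9_general hle hH he hSH hScard hS2 A hA
end

section
/- For any finite abelian group G and integer k ≥ 1, N_k(G) equals the maximum of |A| over all aperiodic subsets A ⊆ G such that k(A ∪ {0}) ≠ G and k(A ∪ {0} ∪ {g}) = G for every g ∈ G∖A (with the convention max ∅ = 0). -/
open Pointwise

/-!
Both conditions defining `Nk` are invariant under translation, and so is cardinality, so a
nonempty extremal set may be translated to contain `0`. Conversely, a set maximal in the sense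
involving `A ∪ {0}` must already contain `0`: otherwise `g = 0` would be an admissible element to
add, and adding it changes nothing.
-/

section

variable {G : Type*} [AddCommGroup G] {k : ℕ} {A : Set G}

/-- Aperiodicity of a subset `A` of an abelian group: the period `π(A) = {g | A + g = A}` is
trivial. The translate `A + g` is written `g +ᵥ A`. -/
def IsAperiodic (A : Set G) : Prop :=
  {g : G | g +ᵥ A = A} = {0}

/-- A maximal nonbasis of order `k`: a set `A` with `kA ≠ G` such that adjoining any further
element yields a set whose `k`-fold sumset is `G`. `Nk` measures the aperiodic ones. -/
def IsMaximalNonbasis (k : ℕ) (A : Set G) : Prop :=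
  itSum k A ≠ Set.univ ∧ ∀ g ∉ A, itSum k (A ∪ {g}) = Set.univ

theorem IsAperiodic.vadd (hA : IsAperiodic A) (t : G) : IsAperiodic (t +ᵥ A) := by
  simpa only [IsAperiodic, vadd_comm _ t A, vadd_left_cancel_iff] using hA

theorem itSum_vadd (k : ℕ) (t : G) (A : Set G) : itSum k (t +ᵥ A) = k • t +ᵥ itSum k A := by
  induction k with
  | zero => simp only [itSum, zero_nsmul, zero_vadd]
  | succ k ih =>
    calc itSum k (t +ᵥ A) + (t +ᵥ A)
        = (k • t +ᵥ itSum k A) + (t +ᵥ A) := by rw [ih]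
      _ = (k + 1) • t +ᵥ (itSum k A + A) := by
        rw [vadd_add_vadd_comm, ← succ_nsmul]

theorem itSum_vadd_eq_univ_iff (t : G) :
    itSum k (t +ᵥ A) = Set.univ ↔ itSum k A = Set.univ := by
  rw [itSum_vadd, vadd_eq_iff_eq_neg_vadd, Set.vadd_set_univ]

theorem IsMaximalNonbasis.vadd (hA : IsMaximalNonbasis k A) (t : G) :
    IsMaximalNonbasis k (t +ᵥ A) := by
  refine ⟨(itSum_vadd_eq_univ_iff t).not.mpr hA.1, fun g hg => ?_⟩
  have translate_union : (t +ᵥ A) ∪ {g} = t +ᵥ (A ∪ {-t +ᵥ g}) := by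
    rw [Set.vadd_set_union, Set.vadd_set_singleton, vadd_neg_vadd]
  rw [translate_union, itSum_vadd_eq_univ_iff]
  exact hA.2 _ (Set.mem_vadd_set_iff_neg_vadd_mem.not.mp hg)

theorem zero_mem_and_isMaximalNonbasis_iff :
    0 ∈ A ∧ IsMaximalNonbasis k A ↔
      itSum k (A ∪ {0}) ≠ Set.univ ∧ ∀ g ∉ A, itSum k (A ∪ {0} ∪ {g}) = Set.univ := by
  have union_zero (h0 : 0 ∈ A) : A ∪ {0} = A :=
    Set.union_eq_left.mpr (Set.singleton_subset_iff.mpr h0)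
  constructor
  · rintro ⟨h0, hA⟩
    rwa [union_zero h0]
  · rintro ⟨hne, hmax⟩
    have h0 : 0 ∈ A := by
      by_contra h0
      apply hne
      simpa only [Set.union_assoc, Set.union_self] using hmax 0 h0
    rw [union_zero h0] at hne hmax
    exact ⟨h0, hne, hmax⟩

end

theorem sSup_ncard_eq_sSup_ncard_zero_mem {G : Type*} [AddGroup G] {𝓕 : Set (Set G)}
    (hvadd : ∀ A ∈ 𝓕, ∀ t : G, t +ᵥ A ∈ 𝓕) (hbdd : BddAbove (Set.ncard '' 𝓕)) :
    sSup (Set.ncard '' 𝓕) = sSup (Set.ncard '' {A ∈ 𝓕 | 0 ∈ A}) := by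
  have image_subset : Set.ncard '' {A ∈ 𝓕 | 0 ∈ A} ⊆ Set.ncard '' 𝓕 :=
    Set.image_mono (Set.sep_subset _ _)
  refine le_antisymm (csSup_le' ?_) (csSup_le_csSup' hbdd image_subset)
  rintro _ ⟨A, hA, rfl⟩
  obtain rfl | ⟨a, ha⟩ := A.eq_empty_or_nonempty
  · simp only [Set.ncard_empty, zero_le]
  · have zero_mem : 0 ∈ -a +ᵥ A := Set.mem_vadd_set.mpr ⟨a, ha, neg_add_cancel a⟩
    rw [← Set.ncard_vadd_set (-a) A]
    exact le_csSup (hbdd.mono image_subset) ⟨_, ⟨hvadd A hA (-a), zero_mem⟩, rfl⟩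

theorem Nk_eq_sSup_ncard (G : Type*) [AddCommGroup G] (k : ℕ) :
    Nk G k = sSup (Set.ncard '' {A : Set G | IsAperiodic A ∧ IsMaximalNonbasis k A}) := by
  simp only [Nk, Set.image, IsAperiodic, IsMaximalNonbasis, Set.mem_ofPred_eq, and_assoc,
    eq_comm (b := Set.ncard _)]

/-- `N_k(G)` equals the maximum of `|A|` over all aperiodic `A ⊆ G` such that
`k(A ∪ {0}) ≠ G` and `k(A ∪ {0} ∪ {g}) = G` for every `g ∈ G∖A`. -/
theorem stmt13 (G : Type*) [AddCommGroup G] [Finite G] (k : ℕ) (hk : 1 ≤ k) :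
    Nk G k = sSup {m : ℕ | ∃ A : Set G,
      {g : G | g +ᵥ A = A} = {0} ∧
      itSum k (A ∪ {0}) ≠ Set.univ ∧
      (∀ g ∉ A, itSum k (A ∪ {0} ∪ {g}) = Set.univ) ∧
      m = A.ncard} := by
  let 𝓕 : Set (Set G) := {A | IsAperiodic A ∧ IsMaximalNonbasis k A}
  have hvadd : ∀ A ∈ 𝓕, ∀ t : G, t +ᵥ A ∈ 𝓕 := fun A hA t => ⟨hA.1.vadd t, hA.2.vadd t⟩
  have hbdd : BddAbove (Set.ncard '' 𝓕) := (Set.toFinite _).bddAbove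
  have mem_zero_iff (A : Set G) : A ∈ {A ∈ 𝓕 | 0 ∈ A} ↔ {g : G | g +ᵥ A = A} = {0} ∧
      itSum k (A ∪ {0}) ≠ Set.univ ∧ ∀ g ∉ A, itSum k (A ∪ {0} ∪ {g}) = Set.univ := by
    rw [← zero_mem_and_isMaximalNonbasis_iff, Set.mem_sep_iff, and_comm (a := 0 ∈ A), ← and_assoc]
    rfl
  rw [Nk_eq_sSup_ncard, sSup_ncard_eq_sSup_ncard_zero_mem hvadd hbdd]
  simp only [Set.image, mem_zero_iff, and_assoc, eq_comm (b := Set.ncard _)]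
end

section
/- Let n ≥ 1 be an integer and let A be a nonempty subset of G = (ℤ/5ℤ)^n of density α = 5^(-n)|A| such that 0 ∉ 3A. Then there exist a non-principal (additive) character χ of G and a complex cube root of unity ζ such that Re(−ζ · \widehat{1_A}(χ)) ≥ α²/(1−α), where \widehat{1_A}(χ) := 5^(-n) ∑_{a ∈ A} χ(a). -/
open Pointwise

/-!
Write `Â` for the Fourier transform of `1_A`. Orthogonality gives `∑ ‖Â χ‖² = α`, and
`∑ (Â χ)³ = 0` because no three elements of `A`, repetitions allowed, have sum zero. Removing the
principal character, for which `Â 1 = α`, leaves `∑ Re (-Â χ)³ = α³ = α² / (1 - α) * ∑ ‖Â χ‖²`, so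
some non-principal `χ` satisfies `α² / (1 - α) * ‖Â χ‖² ≤ Re (-Â χ)³` with `Â χ ≠ 0`. Finally,
rotating `w = -Â χ` by a cube root of unity `ζ` into the right half-plane does not change `w³`, and
`Re z³ ≤ Re z * ‖z‖²` for `z = ζ * w`.
-/

section RootsOfUnity

lemma exists_pow_eq_one_and_re_mul_nonneg {k : ℕ} (hk : 1 < k) (w : ℂ) :
    ∃ ζ : ℂ, ζ ^ k = 1 ∧ 0 ≤ (ζ * w).re := by
  have hprim := Complex.isPrimitiveRoot_exp k (by lia)
  set ξ := Complex.exp (2 * Real.pi * Complex.I / k)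
  have hsum : ∑ _i ∈ Finset.range k, (0 : ℝ) ≤ ∑ i ∈ Finset.range k, (ξ ^ i * w).re := by
    rw [← Complex.re_sum, ← Finset.sum_mul, hprim.geom_sum_eq_zero hk]
    simp
  obtain ⟨i, -, hi⟩ := Finset.exists_le_of_sum_le (Finset.nonempty_range_iff.2 (by lia)) hsum
  exact ⟨ξ ^ i, by rw [pow_right_comm, hprim.pow_eq_one, one_pow], hi⟩

lemma re_pow_three_le_re_mul_sq_norm {z : ℂ} (hz : 0 ≤ z.re) :
    (z ^ 3).re ≤ z.re * ‖z‖ ^ 2 := by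
  have hre : (z ^ 3).re = z.re * (z.re ^ 2 - 3 * z.im ^ 2) := by
    simp only [pow_succ, pow_zero, one_mul, Complex.mul_re, Complex.mul_im]
    ring
  rw [hre, Complex.sq_norm, Complex.normSq_apply]
  exact mul_le_mul_of_nonneg_left (by nlinarith [sq_nonneg z.im]) hz

lemma exists_pow_three_eq_one_and_re_pow_three_le (w : ℂ) :
    ∃ ζ : ℂ, ζ ^ 3 = 1 ∧ (w ^ 3).re ≤ (ζ * w).re * ‖w‖ ^ 2 := by
  obtain ⟨ζ, hζ, hre⟩ := exists_pow_eq_one_and_re_mul_nonneg (by norm_num : 1 < 3) w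
  refine ⟨ζ, hζ, ?_⟩
  have hnorm : ‖ζ‖ = 1 := Complex.norm_eq_one_of_pow_eq_one hζ three_ne_zero
  simpa only [mul_pow, hζ, one_mul, norm_mul, hnorm] using re_pow_three_le_re_mul_sq_norm hre

end RootsOfUnity

section FourierTransform

lemma addChar_map_sum {ι A M : Type*} [AddCommMonoid A] [CommMonoid M] (ψ : AddChar A M)
    (s : Finset ι) (f : ι → A) : ψ (∑ i ∈ s, f i) = ∏ i ∈ s, ψ (f i) :=
  map_prod ψ.toMonoidHom (fun i => Multiplicative.ofAdd (f i)) s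

variable {G : Type*} [AddCommGroup G] [Fintype G]

/-- The Fourier transform `χ ↦ |G|⁻¹ ∑_{a ∈ A} χ(a)` of the indicator function of `A`, normalized by
the uniform probability measure on `G`; the character is not conjugated. -/
noncomputable def indicatorFourier (A : Finset G) (χ : AddChar G ℂ) : ℂ :=
  (Fintype.card G : ℂ)⁻¹ * ∑ a ∈ A, χ a

lemma indicatorFourier_one (A : Finset G) : indicatorFourier A 1 = (A.dens : ℝ) := by
  simp [indicatorFourier, Finset.nnratCast_dens, div_eq_inv_mul]

lemma sum_sq_norm_indicatorFourier (A : Finset G) :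
    ∑ χ, ‖indicatorFourier A χ‖ ^ 2 = A.dens := by
  classical
  have hsq (χ : AddChar G ℂ) : ((‖∑ a ∈ A, χ a‖ ^ 2 : ℝ) : ℂ) = ∑ a ∈ A, ∑ b ∈ A, χ (a - b) := by
    rw [Complex.ofReal_pow, ← Complex.mul_conj', map_sum, Finset.sum_mul_sum]
    simp only [sub_eq_add_neg, AddChar.map_add_eq_mul, AddChar.map_neg_eq_conj]
  have hsum : ∑ χ : AddChar G ℂ, ‖∑ a ∈ A, χ a‖ ^ 2 = Fintype.card G * A.card := by
    apply Complex.ofReal_injective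
    rw [Complex.ofReal_sum, Finset.sum_congr rfl fun χ _ => hsq χ, Finset.sum_comm]
    simp only [Finset.sum_comm (s := Finset.univ) (t := A), AddChar.sum_apply_eq_ite, sub_eq_zero,
      Finset.sum_ite_eq]
    simp [mul_comm]
  simp only [indicatorFourier, norm_mul, norm_inv, Complex.norm_natCast, mul_pow,
    ← Finset.mul_sum, hsum, Finset.nnratCast_dens]
  field_simp

lemma sum_indicatorFourier_pow [DecidableEq G] (A : Finset G) (k : ℕ) :
    ∑ χ, indicatorFourier A χ ^ k =
      Fintype.card G * {p ∈ Fintype.piFinset fun _ : Fin k => A | ∑ i, p i = 0}.card /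
        (Fintype.card G : ℂ) ^ k := by
  have hpow (χ : AddChar G ℂ) :
      (∑ a ∈ A, χ a) ^ k = ∑ p ∈ Fintype.piFinset fun _ : Fin k => A, χ (∑ i, p i) := by
    simp only [Finset.sum_pow', addChar_map_sum]
  simp only [indicatorFourier, mul_pow, ← Finset.mul_sum, hpow]
  rw [Finset.sum_comm]
  simp only [AddChar.sum_apply_eq_ite, ← Finset.sum_filter, Finset.sum_const, nsmul_eq_mul]
  ring

lemma sum_indicatorFourier_pow_three_eq_zero [DecidableEq G] {A : Finset G}
    (h : (0 : G) ∉ A + A + A) : ∑ χ, indicatorFourier A χ ^ 3 = 0 := by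
  have hempty : {p ∈ Fintype.piFinset fun _ : Fin 3 => A | ∑ i, p i = 0} = ∅ := by
    refine Finset.filter_eq_empty_iff.2 fun p hp hsum => h ?_
    rw [Fintype.mem_piFinset] at hp
    rw [← hsum, Fin.sum_univ_three]
    exact Finset.add_mem_add (Finset.add_mem_add (hp 0) (hp 1)) (hp 2)
  simp [sum_indicatorFourier_pow, hempty]

lemma sum_erase_one_sq_norm_indicatorFourier [DecidableEq (AddChar G ℂ)] (A : Finset G) :
    ∑ χ ∈ Finset.univ.erase 1, ‖indicatorFourier A χ‖ ^ 2 = A.dens * (1 - A.dens : ℝ) := by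
  rw [Finset.sum_erase_eq_sub (Finset.mem_univ _), sum_sq_norm_indicatorFourier,
    indicatorFourier_one, Complex.norm_real, Real.norm_eq_abs, sq_abs]
  ring

lemma sum_erase_one_re_neg_indicatorFourier_pow_three [DecidableEq G] [DecidableEq (AddChar G ℂ)]
    {A : Finset G} (h : (0 : G) ∉ A + A + A) :
    ∑ χ ∈ Finset.univ.erase 1, ((-indicatorFourier A χ) ^ 3).re = (A.dens : ℝ) ^ 3 := by
  simp only [Odd.neg_pow (by decide : Odd 3)]
  rw [← Complex.re_sum, Finset.sum_neg_distrib, Finset.sum_erase_eq_sub (Finset.mem_univ _),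
    sum_indicatorFourier_pow_three_eq_zero h, indicatorFourier_one, zero_sub, neg_neg,
    ← Complex.ofReal_pow, Complex.ofReal_re]

lemma dens_lt_one_of_zero_notMem_add_add [DecidableEq G] {A : Finset G}
    (h : (0 : G) ∉ A + A + A) : (A.dens : ℝ) < 1 := by
  have hA : A ≠ Finset.univ := by
    rintro rfl
    exact h (by simp)
  exact_mod_cast Finset.dens_le_one.lt_of_ne (Finset.dens_ne_one.2 hA)

lemma exists_ne_one_mul_sq_norm_indicatorFourier_le [DecidableEq G] {A : Finset G}
    (hA : A.Nonempty) (h : (0 : G) ∉ A + A + A) :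
    ∃ χ : AddChar G ℂ, χ ≠ 1 ∧ indicatorFourier A χ ≠ 0 ∧
      (A.dens : ℝ) ^ 2 / (1 - A.dens) * ‖indicatorFourier A χ‖ ^ 2 ≤
        ((-indicatorFourier A χ) ^ 3).re := by
  classical
  have hpos : (0 : ℝ) < A.dens := by exact_mod_cast Finset.dens_pos.2 hA
  have hlt : (0 : ℝ) < 1 - A.dens := sub_pos.2 (dens_lt_one_of_zero_notMem_add_add h)
  have hcube := sum_erase_one_re_neg_indicatorFourier_pow_three h
  have hsum : ∑ χ ∈ Finset.univ.erase 1,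
      (A.dens : ℝ) ^ 2 / (1 - A.dens) * ‖indicatorFourier A χ‖ ^ 2 =
        ∑ χ ∈ Finset.univ.erase 1, ((-indicatorFourier A χ) ^ 3).re := by
    rw [← Finset.mul_sum, sum_erase_one_sq_norm_indicatorFourier, hcube]
    field_simp
  by_contra! hall
  obtain ⟨ψ, hψ, hne⟩ :=
    Finset.exists_ne_zero_of_sum_ne_zero (hcube.trans_ne (pow_ne_zero 3 hpos.ne'))
  refine hsum.not_gt (Finset.sum_lt_sum (fun χ hχ => ?_) ⟨ψ, hψ, ?_⟩)
  · by_cases h0 : indicatorFourier A χ = 0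
    · simp [h0]
    · exact (hall χ (Finset.ne_of_mem_erase hχ) h0).le
  · exact hall ψ (Finset.ne_of_mem_erase hψ) fun h0 => hne (by simp [h0])

end FourierTransform

theorem stmt16_general {G : Type*} [AddCommGroup G] [Fintype G] [DecidableEq G] {A : Finset G}
    (hA : A.Nonempty) (h : (0 : G) ∉ A + A + A) :
    ∃ χ : AddChar G ℂ, χ ≠ 1 ∧ ∃ ζ : ℂ, ζ ^ 3 = 1 ∧
      (A.dens : ℝ) ^ 2 / (1 - A.dens) ≤ (-(ζ * indicatorFourier A χ)).re := by
  obtain ⟨χ, hχ, hne, hle⟩ := exists_ne_one_mul_sq_norm_indicatorFourier_le hA h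
  obtain ⟨ζ, hζ, hre⟩ := exists_pow_three_eq_one_and_re_pow_three_le (-indicatorFourier A χ)
  rw [norm_neg, mul_neg] at hre
  exact ⟨χ, hχ, ζ, hζ, le_of_mul_le_mul_right (hle.trans hre) (by positivity)⟩

/-- Let `A ⊆ (ℤ/5ℤ)ⁿ` be nonempty of density `α` with `0 ∉ 3A`. Then there are a
non-principal character `χ` and a cube root of unity `ζ` with
`Re(−ζ·\widehat{1_A}(χ)) ≥ α²/(1−α)`, where `\widehat{1_A}(χ) = 5⁻ⁿ ∑_{a ∈ A} χ(a)`. -/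
theorem stmt16 (n : ℕ) (hn : 1 ≤ n) (A : Finset (Fin n → ZMod 5))
    (hne : A.Nonempty)
    (h3A : (0 : Fin n → ZMod 5) ∉ A + A + A) :
    ∃ χ : AddChar (Fin n → ZMod 5) ℂ, χ ≠ 1 ∧
      ∃ ζ : ℂ, ζ ^ 3 = 1 ∧
        (-(ζ * (((5 : ℂ) ^ n)⁻¹ * ∑ a ∈ A, χ a))).re ≥
          ((A.card : ℝ) / 5 ^ n) ^ 2 / (1 - (A.card : ℝ) / 5 ^ n) := by
  have hcard : Fintype.card (Fin n → ZMod 5) = 5 ^ n := by simp [ZMod.card]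
  simpa [indicatorFourier, Finset.nnratCast_dens, hcard] using stmt16_general hne h3A
end
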